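/- arXiv:2502.13112 — 2 statements merged into one kernel-verified Lean document; each statement's English description precedes it below -/
import Mathlib

section
/- (Cost of tightening the feasible set.) Let g : ℝ^d → ℝ be convex with X := {x : g(x) ≤ 0} ⊆ RB for some R > 0, and assume (A3) and (A4). Let each f_t : ℝ^d → ℝ (t = 1,…,T) be convex and differentiable with ‖∇f_t(x)‖ ≤ G_f for all x ∈ RB. Then for every ρ ∈ [0, ε] and every x* with g(x*) ≤ 0, there exists x' ∈ X_ρ such that ∑_{t=1}^T (f_t(x') − f_t(x*)) ≤ (G_f·ρ/σ)·T. -/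
open scoped RealInnerProductSpace Classical

def IsSubgradAt {d : ℕ} (g : EuclideanSpace ℝ (Fin d) → ℝ)
    (x s : EuclideanSpace ℝ (Fin d)) : Prop :=
  ∀ y, g x + ⟪s, y - x⟫ ≤ g y

/-!
Let `p` be the projection of `x` onto the sublevel set `{g ≤ c}`, where `c < g x`. That set lies in
the half-space `⟪x - p, · - p⟫ ≤ 0`, so `g - c` is nonnegative wherever `⟪x - p, · - p⟫ > 0`, and a
Lagrange multiplier `μ ≥ 0` for this constraint makes `μ • (x - p)` a subgradient of `g` at `p`. If
subgradients on the level `c` have norm at least `σ`, the subgradient inequality at `x` reads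
`σ * ‖x - p‖ ≤ g x - c`. Moving from `x` towards `p` therefore decreases `g` at rate at least `σ`:
with `c = -ε`, the level `-ρ` is reached within distance `ρ / σ` of a feasible point, and Lipschitz
losses grow by at most `Gf * ρ / σ` each.
-/

open Filter Set Topology
open scoped NNReal

section LagrangeMultiplier

variable {E : Type*} [AddCommGroup E] [Module ℝ E] {s : Set E} {G ℓ : E → ℝ} {y z : E}

theorem weighted_add_nonneg_of_weighted_add_pos (hG : ConvexOn ℝ s G) (hℓ : ConcaveOn ℝ s ℓ)
    (hpos : ∀ w ∈ s, 0 < ℓ w → 0 ≤ G w) (hy : y ∈ s) (hz : z ∈ s) {a b : ℝ} (ha : 0 ≤ a)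
    (hb : 0 ≤ b) (hab : 0 < a * ℓ y + b * ℓ z) : 0 ≤ a * G y + b * G z := by
  have hsum : 0 < a + b := by
    refine (add_nonneg ha hb).lt_of_ne' fun h => ?_
    obtain ⟨rfl, rfl⟩ := (add_eq_zero_iff_of_nonneg ha hb).1 h
    simp at hab
  set w := (a / (a + b)) • y + (b / (a + b)) • z
  have hws : w ∈ s := convex_iff_div.1 hG.1 hy hz ha hb hsum
  have hℓw : (a * ℓ y + b * ℓ z) / (a + b) ≤ ℓ w := by
    simpa [add_div, div_mul_eq_mul_div] using (concaveOn_iff_div.1 hℓ).2 hy hz ha hb hsum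
  have hGw : G w ≤ (a * G y + b * G z) / (a + b) := by
    simpa [add_div, div_mul_eq_mul_div] using (convexOn_iff_div.1 hG).2 hy hz ha hb hsum
  have hGw_nonneg : 0 ≤ G w := hpos w hws ((div_pos hab hsum).trans_le hℓw)
  simpa [hsum.ne'] using mul_nonneg (hGw_nonneg.trans hGw) hsum.le

theorem mul_le_mul_of_convexOn_of_concaveOn (hG : ConvexOn ℝ s G) (hℓ : ConcaveOn ℝ s ℓ)
    (hpos : ∀ w ∈ s, 0 < ℓ w → 0 ≤ G w) (hy : y ∈ s) (hz : z ∈ s) (hℓy : ℓ y ≤ 0)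
    (hℓz : 0 < ℓ z) : ℓ y * G z ≤ ℓ z * G y := by
  -- `hpos` says nothing at a zero of `ℓ`, so the zero is approached from the side `ℓ > 0`.
  have hperturbed : ∀ δ > 0, ℓ y * G z ≤ ℓ z * G y + δ * G z := by
    intro δ hδ
    have := weighted_add_nonneg_of_weighted_add_pos hG hℓ hpos hy hz hℓz.le
      (b := δ - ℓ y) (by linarith) (by linarith [mul_pos hδ hℓz])
    linarith
  have hlim : Tendsto (fun δ => ℓ z * G y + δ * G z) (𝓝[>] 0) (𝓝 (ℓ z * G y)) := by
    have hcont : Continuous fun δ : ℝ => ℓ z * G y + δ * G z := by fun_prop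
    simpa using (hcont.tendsto 0).mono_left nhdsWithin_le_nhds
  exact ge_of_tendsto hlim (eventually_mem_nhdsWithin.mono hperturbed)

theorem exists_lagrange_multiplier (hG : ConvexOn ℝ s G) (hℓ : ConcaveOn ℝ s ℓ)
    (hpos : ∀ w ∈ s, 0 < ℓ w → 0 ≤ G w) (hslater : ∃ z ∈ s, 0 < ℓ z) :
    ∃ μ : ℝ, 0 ≤ μ ∧ ∀ y ∈ s, μ * ℓ y ≤ G y := by
  obtain ⟨z₀, hz₀, hℓz₀⟩ := hslater
  set slopes : Set ℝ := (fun z => G z / ℓ z) '' {z ∈ s | 0 < ℓ z}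
  have hnonneg : ∀ r ∈ slopes, 0 ≤ r := by
    rintro _ ⟨z, ⟨hz, hℓz⟩, rfl⟩
    exact div_nonneg (hpos z hz hℓz) hℓz.le
  refine ⟨sInf slopes, Real.sInf_nonneg hnonneg, fun y hy => ?_⟩
  rcases lt_trichotomy (ℓ y) 0 with hneg | hzero | hpos_y
  · have hle : G y / ℓ y ≤ sInf slopes := by
      refine le_csInf ⟨_, z₀, ⟨hz₀, hℓz₀⟩, rfl⟩ ?_
      rintro _ ⟨z, ⟨hz, hℓz⟩, rfl⟩
      rw [div_le_iff_of_neg hneg, div_mul_eq_mul_div, div_le_iff₀ hℓz]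
      linarith [mul_le_mul_of_convexOn_of_concaveOn hG hℓ hpos hy hz hneg.le hℓz]
    exact (div_le_iff_of_neg hneg).1 hle
  · have := mul_le_mul_of_convexOn_of_concaveOn hG hℓ hpos hy hz₀ hzero.le hℓz₀
    rw [hzero, zero_mul] at this
    simpa [hzero] using nonneg_of_mul_nonneg_right this hℓz₀
  · exact (le_div_iff₀ hpos_y).1 (csInf_le ⟨0, hnonneg⟩ ⟨y, ⟨hy, hpos_y⟩, rfl⟩)

end LagrangeMultiplier

/-- `s` is a subgradient of `g` at `x`, in an arbitrary real inner product space. On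
`EuclideanSpace ℝ (Fin d)` this is definitionally `IsSubgradAt`. -/
def IsSubgradientAt {E : Type*} [NormedAddCommGroup E] [InnerProductSpace ℝ E] (g : E → ℝ)
    (x s : E) : Prop :=
  ∀ y, g x + ⟪s, y - x⟫ ≤ g y

section ErrorBound

variable {E : Type*} [NormedAddCommGroup E] [InnerProductSpace ℝ E] {g : E → ℝ} {x : E} {c σ : ℝ}

theorem concaveOn_inner_sub (u p : E) : ConcaveOn ℝ univ fun y => ⟪u, y - p⟫ := by
  simp only [inner_sub_right]
  exact ((innerₛₗ ℝ u).concaveOn convex_univ).sub (convexOn_const _ convex_univ)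

theorem exists_inner_sub_le_zero_of_isClosed_of_convex [CompleteSpace E] {K : Set E}
    (hne : K.Nonempty) (hclosed : IsClosed K) (hconv : Convex ℝ K) (x : E) :
    ∃ p ∈ K, ∀ w ∈ K, ⟪x - p, w - p⟫ ≤ 0 := by
  obtain ⟨p, hpK, hmin⟩ := exists_norm_eq_iInf_of_complete_convex hne hclosed.isComplete hconv x
  exact ⟨p, hpK, (norm_eq_iInf_iff_real_inner_le_zero hconv hpK).1 hmin⟩

theorem exists_isSubgradientAt_smul_sub [CompleteSpace E] (hconv : ConvexOn ℝ univ g)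
    (hlsc : LowerSemicontinuous g) (hne : ∃ z, g z ≤ c) (hx : c < g x) :
    ∃ p, ∃ μ : ℝ, 0 ≤ μ ∧ g p = c ∧ IsSubgradientAt g p (μ • (x - p)) := by
  obtain ⟨p, hpc : g p ≤ c, hproj⟩ := exists_inner_sub_le_zero_of_isClosed_of_convex
    (K := {z | g z ≤ c}) hne (hlsc.isClosed_preimage c) (by simpa using hconv.convex_le c) x
  have hsep : ∀ y ∈ univ, 0 < ⟪x - p, y - p⟫ → 0 ≤ g y - c := fun y _ hy =>
    sub_nonneg.2 (le_of_not_ge fun hyc => (hproj y hyc).not_gt hy)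
  have hxp : x - p ≠ 0 := sub_ne_zero.2 fun h => (h ▸ hpc).not_gt hx
  obtain ⟨μ, hμ, hle⟩ := exists_lagrange_multiplier (hconv.sub (concaveOn_const c convex_univ))
    (concaveOn_inner_sub (x - p) p) hsep ⟨x, mem_univ x, real_inner_self_pos.2 hxp⟩
  have hpc' : g p = c := hpc.antisymm (by simpa using hle p (mem_univ p))
  refine ⟨p, μ, hμ, hpc', fun y => ?_⟩
  have : μ * ⟪x - p, y - p⟫ ≤ g y - c := hle y (mem_univ y)
  rw [real_inner_smul_left, hpc']
  linarith

theorem exists_level_mul_dist_le [CompleteSpace E] (hconv : ConvexOn ℝ univ g)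
    (hlsc : LowerSemicontinuous g) (hne : ∃ z, g z ≤ c)
    (hσ : ∀ z, g z = c → ∀ v, IsSubgradientAt g z v → σ ≤ ‖v‖) (hx : c < g x) :
    ∃ p, g p = c ∧ σ * dist x p ≤ g x - c := by
  obtain ⟨p, μ, hμ, hpc, hsub⟩ := exists_isSubgradientAt_smul_sub hconv hlsc hne hx
  refine ⟨p, hpc, ?_⟩
  calc σ * dist x p ≤ ‖μ • (x - p)‖ * dist x p := by gcongr; exact hσ p hpc _ hsub
    _ = ⟪μ • (x - p), x - p⟫ := by
      rw [norm_smul_of_nonneg hμ, dist_eq_norm, real_inner_smul_left, real_inner_self_eq_norm_sq]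
      ring
    _ ≤ g x - c := by linarith [hsub x]

end ErrorBound

theorem exists_sublevel_mul_dist_le {E : Type*} [SeminormedAddCommGroup E]
    [NormedSpace ℝ E] {g : E → ℝ} {s : Set E} {x p : E} {a σ : ℝ} (hconv : ConvexOn ℝ s g)
    (hxs : x ∈ s) (hps : p ∈ s) (hdist : σ * dist x p ≤ g x - g p) (hpa : g p ≤ a)
    (hax : a < g x) : ∃ x' ∈ s, g x' ≤ a ∧ σ * dist x' x ≤ g x - a := by
  have hgap : 0 < g x - g p := by linarith
  set θ := (g x - a) / (g x - g p)
  have hθ_mul : θ * (g x - g p) = g x - a := div_mul_cancel₀ _ hgap.ne'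
  have hθ0 : 0 ≤ θ := div_nonneg (by linarith) hgap.le
  have hθ1 : θ ≤ 1 := (div_le_one hgap).2 (by linarith)
  refine ⟨AffineMap.lineMap x p θ, hconv.1.lineMap_mem hxs hps ⟨hθ0, hθ1⟩, ?_, ?_⟩
  · have hle := hconv.2 hxs hps (sub_nonneg.2 hθ1) hθ0 (sub_add_cancel 1 θ)
    rw [smul_eq_mul, smul_eq_mul] at hle
    rw [AffineMap.lineMap_apply_module]
    linarith
  · rw [dist_lineMap_left, Real.norm_of_nonneg hθ0]
    linarith [mul_le_mul_of_nonneg_left hdist hθ0]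

theorem lipschitzOnWith_of_norm_gradient_le {E : Type*} [NormedAddCommGroup E]
    [InnerProductSpace ℝ E] [CompleteSpace E] {f : E → ℝ} {s : Set E} {C : ℝ≥0}
    (hs : Convex ℝ s) (hf : ∀ x ∈ s, DifferentiableAt ℝ f x)
    (hC : ∀ x ∈ s, ‖gradient f x‖ ≤ C) : LipschitzOnWith C f s :=
  hs.lipschitzOnWith_of_nnnorm_fderiv_le hf fun x hx => by
    simpa [gradient, ← NNReal.coe_le_coe] using hC x hx

theorem sum_sub_le_of_lipschitzOnWith {α ι : Type*} [PseudoMetricSpace α] {s : Finset ι}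
    {f : ι → α → ℝ} {X : Set α} {C : ℝ≥0} {r : ℝ} {x y : α}
    (hf : ∀ t ∈ s, LipschitzOnWith C (f t) X) (hx : x ∈ X) (hy : y ∈ X) (hxy : dist x y ≤ r) :
    ∑ t ∈ s, (f t x - f t y) ≤ C * r * s.card := by
  have hterm : ∀ t ∈ s, f t x - f t y ≤ C * r := fun t ht =>
    calc f t x - f t y ≤ dist (f t x) (f t y) := le_abs_self _
      _ ≤ C * dist x y := (hf t ht).dist_le_mul x hx y hy
      _ ≤ C * r := by gcongr
  simpa [mul_comm] using Finset.sum_le_card_nsmul s _ _ hterm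

theorem exists_tightened_dist_le {E : Type*} [NormedAddCommGroup E] [InnerProductSpace ℝ E]
    [CompleteSpace E] {ε σ ρ : ℝ} {g : E → ℝ} {x : E} (hconv : ConvexOn ℝ univ g)
    (hlsc : LowerSemicontinuous g) (hσ : 0 < σ) (hne : ∃ z, g z ≤ -ε)
    (hsub : ∀ z, g z = -ε → ∀ v, IsSubgradientAt g z v → σ ≤ ‖v‖)
    (hρ0 : 0 ≤ ρ) (hρε : ρ ≤ ε) (hx : g x ≤ 0) :
    ∃ x', g x' ≤ -ρ ∧ dist x' x ≤ ρ / σ := by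
  rcases le_or_gt (g x) (-ρ) with hxρ | hxρ
  · exact ⟨x, hxρ, by simpa using div_nonneg hρ0 hσ.le⟩
  obtain ⟨p, hp, hdist⟩ := exists_level_mul_dist_le hconv hlsc hne hsub (x := x) (by linarith)
  obtain ⟨x', -, hx'ρ, hx'⟩ := exists_sublevel_mul_dist_le hconv (mem_univ x)
    (mem_univ p) (by rwa [hp]) (by linarith) hxρ
  exact ⟨x', hx'ρ, (le_div_iff₀' hσ).2 (by linarith)⟩

theorem stmt15_general {E ι : Type*} [NormedAddCommGroup E] [InnerProductSpace ℝ E]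
    [CompleteSpace E] {s : Finset ι} {C : ℝ≥0} {ε σ ρ : ℝ} {g : E → ℝ} {f : ι → E → ℝ}
    (hconv : ConvexOn ℝ univ g) (hlsc : LowerSemicontinuous g) (hσ : 0 < σ)
    (hne : ∃ z, g z ≤ -ε) (hsub : ∀ z, g z = -ε → ∀ v, IsSubgradientAt g z v → σ ≤ ‖v‖)
    (hf : ∀ t ∈ s, LipschitzOnWith C (f t) {z | g z ≤ 0}) (hρ0 : 0 ≤ ρ) (hρε : ρ ≤ ε)
    (x : E) (hx : g x ≤ 0) :
    ∃ x', g x' ≤ -ρ ∧ ∑ t ∈ s, (f t x' - f t x) ≤ C * ρ / σ * s.card := by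
  obtain ⟨x', hx'ρ, hdist⟩ := exists_tightened_dist_le hconv hlsc hσ hne hsub hρ0 hρε hx
  have hx' : g x' ≤ 0 := by linarith
  exact ⟨x', hx'ρ, by simpa [mul_div_assoc] using sum_sub_le_of_lipschitzOnWith hf hx' hx hdist⟩

theorem stmt15 {d T : ℕ} {R Gf Gg ε σ ρ : ℝ}
    (g : EuclideanSpace ℝ (Fin d) → ℝ)
    (f : ℕ → EuclideanSpace ℝ (Fin d) → ℝ)
    (hR : 0 < R) (hGf : 0 < Gf) (hGg : 0 < Gg)
    (hgconv : ConvexOn ℝ Set.univ g)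
    (hX : {z : EuclideanSpace ℝ (Fin d) | g z ≤ 0} ⊆ Metric.closedBall 0 R)
    (hA3 : ∀ z ∈ Metric.closedBall (0 : EuclideanSpace ℝ (Fin d)) R,
      ∀ sz, IsSubgradAt g z sz → ‖sz‖ ≤ Gg)
    (hσ : 0 < σ) (hε : 0 < ε) (hσGg : σ ≤ Gg)
    (hA4ne : ∃ z, g z = -ε)
    (hA4 : ∀ z : EuclideanSpace ℝ (Fin d), g z = -ε → ∀ sz, IsSubgradAt g z sz → σ ≤ ‖sz‖)
    (hfconv : ∀ t ∈ Finset.Icc 1 T, ConvexOn ℝ Set.univ (f t))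
    (hfdiff : ∀ t ∈ Finset.Icc 1 T, Differentiable ℝ (f t))
    (hA2 : ∀ t ∈ Finset.Icc 1 T, ∀ z ∈ Metric.closedBall (0 : EuclideanSpace ℝ (Fin d)) R,
      ‖gradient (f t) z‖ ≤ Gf)
    (hρ0 : 0 ≤ ρ) (hρε : ρ ≤ ε) :
    ∀ xstar : EuclideanSpace ℝ (Fin d), g xstar ≤ 0 →
      ∃ x' : EuclideanSpace ℝ (Fin d), g x' ≤ -ρ ∧
        ∑ t ∈ Finset.Icc 1 T, (f t x' - f t xstar) ≤ Gf * ρ / σ * T := by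
  lift Gf to ℝ≥0 using hGf.le
  have hcont : Continuous g := continuousOn_univ.1 (hgconv.continuousOn isOpen_univ)
  have hlip : ∀ t ∈ Finset.Icc 1 T, LipschitzOnWith Gf (f t) {z | g z ≤ 0} := fun t ht =>
    (lipschitzOnWith_of_norm_gradient_le (convex_closedBall 0 R)
      (fun z _ => hfdiff t ht z) (hA2 t ht)).mono hX
  simpa using stmt15_general hgconv hcont.lowerSemicontinuous hσ
    (hA4ne.imp fun _ => le_of_eq) hA4 hlip hρ0 hρε
end

section
/- (Corollary 1 under weaker cost-gradient assumptions.) Assume (A1), (A3), (A4), and (A2') each f_t : ℝ^d → ℝ (t = 1,…,T) is convex and differentiable with ‖∇f_t(x)‖ ≤ G_f for all x ∈ X (rather than all x ∈ RB). Suppose T ≥ 1, the initial action satisfies g(x_1) ≤ −α for some α ∈ (0, ε], and the algorithm is run with parameters ρ = α/√T and η = ξ·ρ/(G_f·G_g). Then: (i) g(x_t) ≤ 0 for all t ∈ {1,…,T}; and (ii) for every point x* with g(x*) ≤ 0, ∑_{t=1}^T (f_t(x_t) − f_t(x*)) ≤ ( 2·G_f·G_g·R²/(ξ·α) + G_f·ξ·α/(2·G_g)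 + G_f·α/σ )·√T. -/
open scoped RealInnerProductSpace Classical

noncomputable def projBall {d : ℕ} (R : ℝ) (v : EuclideanSpace ℝ (Fin d)) :
    EuclideanSpace ℝ (Fin d) := (R / max R ‖v‖) • v

/-!
A subgradient cut at `x` contains the tightened set `{g ≤ -ρ}`, so projecting onto it does not move
away from any point `q` of that set, and by the Pythagorean inequality it brings `x` closer to `q`
by a factor `√(1 - σ² / G²)` as soon as the violation `g x + ρ` is at least `σ ‖x - q‖`. Such a `q`
exists by an error bound: the displacement from the projection of `x` onto `{g ≤ -ε}` is normal to
this sublevel set, hence a multiple of a subgradient, whose norm is at least `σ`; sliding along the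
segment extends the bound to every level above `-ε`.

If `x` is within `ρ / G` of the tightened set, then `g x ≤ 0`, so the cost gradient at `x` is
bounded; the step size is such that the gradient step undoes at most what the contraction gains, and
the distance `ρ / G` is preserved. The regret is the usual telescoping estimate against a point
of the tightened set within `ρ / σ` of the comparator.
-/

section Projections

variable {E : Type*} [NormedAddCommGroup E] [InnerProductSpace ℝ E]

/-- The projection onto the closed ball of radius `R` about the origin: `projBall` in an arbitrary
inner product space. -/
noncomputable def closedBallProj (R : ℝ) (v : E) : E := (R / max R ‖v‖) • v

theorem norm_closedBallProj_le {R : ℝ} (hR : 0 ≤ R) (v : E) : ‖closedBallProj R v‖ ≤ R := by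
  rw [closedBallProj, norm_smul, Real.norm_of_nonneg (by positivity), div_mul_eq_mul_div]
  exact div_le_of_le_mul₀ (by positivity) hR (by gcongr; exact le_max_right _ _)

theorem norm_closedBallProj_sub_le {R : ℝ} (hR : 0 < R) (v : E) {q : E} (hq : ‖q‖ ≤ R) :
    ‖closedBallProj R v - q‖ ≤ ‖v - q‖ := by
  rcases le_total ‖v‖ R with hv | hv
  · rw [closedBallProj, max_eq_left hv, div_self hR.ne', one_smul]
  have hv_pos : 0 < ‖v‖ := hR.trans_le hv
  rw [closedBallProj, max_eq_right hv]
  set c := R / ‖v‖ with hc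
  have hc_nonneg : 0 ≤ c := by positivity
  have hc_le : c ≤ 1 := (div_le_one hv_pos).2 hv
  have hinner : ⟪v, q⟫ ≤ c * ‖v‖ ^ 2 := calc
    ⟪v, q⟫ ≤ ‖v‖ * R := (real_inner_le_norm v q).trans (by gcongr)
    _ = c * ‖v‖ ^ 2 := by rw [hc]; field_simp
  refine le_of_sq_le_sq ?_ (norm_nonneg _)
  rw [norm_sub_sq_real, norm_sub_sq_real, norm_smul, real_inner_smul_left,
    Real.norm_of_nonneg hc_nonneg]
  nlinarith [mul_nonneg (sub_nonneg.2 hc_le) (sub_nonneg.2 hinner),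
    mul_nonneg (sq_nonneg (1 - c)) (sq_nonneg ‖v‖)]

/-- The projection onto the half-space `{v | b + ⟪s, v - x⟫ ≤ 0}`. It is the identity for `s = 0`,
where the division by `‖s‖ ^ 2 = 0` gives `0`. -/
noncomputable def halfspaceProj (x s : E) (b : ℝ) (v : E) : E :=
  v - (max (b + ⟪s, v - x⟫) 0 / ‖s‖ ^ 2) • s

theorem halfspaceProj_eq_self {x s v : E} {b : ℝ} (hv : b + ⟪s, v - x⟫ ≤ 0) :
    halfspaceProj x s b v = v := by
  simp [halfspaceProj, max_eq_right hv]

theorem sq_max_zero_sub_max_zero_le (a b : ℝ) :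
    (max a 0 - max b 0) ^ 2 ≤ (max a 0 - max b 0) * (a - b) := by
  rcases le_total a 0 with ha | ha <;> rcases le_total b 0 with hb | hb <;>
    simp only [max_eq_left, max_eq_right, ha, hb] <;> nlinarith

theorem norm_sub_div_smul_sq_le {w s : E} {a : ℝ} (ha : a ^ 2 ≤ a * ⟪w, s⟫) :
    ‖w - (a / ‖s‖ ^ 2) • s‖ ^ 2 ≤ ‖w‖ ^ 2 - a ^ 2 / ‖s‖ ^ 2 := by
  rcases eq_or_ne s 0 with rfl | hs
  · simp
  have hnorm : ‖(a / ‖s‖ ^ 2) • s‖ ^ 2 = a ^ 2 / ‖s‖ ^ 2 := by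
    rw [norm_smul, mul_pow, Real.norm_eq_abs, sq_abs]
    field_simp [norm_ne_zero_iff.2 hs]
  have hinner : a ^ 2 / ‖s‖ ^ 2 ≤ ⟪w, (a / ‖s‖ ^ 2) • s⟫ := by
    rw [real_inner_smul_right, div_mul_eq_mul_div]
    gcongr
  rw [norm_sub_sq_real, hnorm]
  linarith

theorem norm_halfspaceProj_sub_halfspaceProj_sq_le (x s : E) (b : ℝ) (v w : E) :
    ‖halfspaceProj x s b v - halfspaceProj x s b w‖ ^ 2 ≤
      ‖v - w‖ ^ 2 - (max (b + ⟪s, v - x⟫) 0 - max (b + ⟪s, w - x⟫) 0) ^ 2 / ‖s‖ ^ 2 := by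
  have hinner : ⟪v - w, s⟫ = b + ⟪s, v - x⟫ - (b + ⟪s, w - x⟫) := by
    simp only [real_inner_comm s, inner_sub_right]
    ring
  have hdiff : halfspaceProj x s b v - halfspaceProj x s b w = v - w -
      ((max (b + ⟪s, v - x⟫) 0 - max (b + ⟪s, w - x⟫) 0) / ‖s‖ ^ 2) • s := by
    rw [halfspaceProj, halfspaceProj, sub_div, sub_smul]
    abel
  rw [hdiff]
  exact norm_sub_div_smul_sq_le (hinner ▸ sq_max_zero_sub_max_zero_le _ _)

theorem norm_halfspaceProj_sub_halfspaceProj_le (x s : E) (b : ℝ) (v w : E) :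
    ‖halfspaceProj x s b v - halfspaceProj x s b w‖ ≤ ‖v - w‖ :=
  le_of_sq_le_sq ((norm_halfspaceProj_sub_halfspaceProj_sq_le x s b v w).trans
    (sub_le_self _ (by positivity))) (norm_nonneg _)

/-- The factor `√γ` by which a Polyak step contracts the distance to the tightened set, when
subgradients have norm at most `G` and the error bound has modulus `σ`. -/
noncomputable def polyakRate (σ G : ℝ) : ℝ := √(1 - σ ^ 2 / G ^ 2)

theorem polyakRate_lt_one {σ G : ℝ} (hσ : 0 < σ) (hG : 0 < G) : polyakRate σ G < 1 := by
  rw [polyakRate, Real.sqrt_lt' one_pos, one_pow, sub_lt_self_iff]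
  positivity

theorem norm_halfspaceProj_self_sub_le {σ G b : ℝ} {x s q : E} (hσ : 0 < σ) (hs : ‖s‖ ≤ G)
    (hq : b + ⟪s, q - x⟫ ≤ 0) (hxq : σ * ‖x - q‖ ≤ max b 0) :
    ‖halfspaceProj x s b x - q‖ ≤ polyakRate σ G * ‖x - q‖ := by
  have hgain : σ ^ 2 / G ^ 2 * ‖x - q‖ ^ 2 ≤ max b 0 ^ 2 / ‖s‖ ^ 2 := by
    rcases eq_or_ne s 0 with rfl | hs_ne
    · have hb : b ≤ 0 := by simpa using hq
      have hx : ‖x - q‖ = 0 := by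
        rw [max_eq_right hb] at hxq
        exact le_antisymm (nonpos_of_mul_nonpos_right hxq hσ) (norm_nonneg _)
      simp [hx]
    · have : 0 < ‖s‖ := norm_pos_iff.2 hs_ne
      calc σ ^ 2 / G ^ 2 * ‖x - q‖ ^ 2 = (σ * ‖x - q‖) ^ 2 / G ^ 2 := by ring
        _ ≤ max b 0 ^ 2 / ‖s‖ ^ 2 := by gcongr
  have hsq : ‖halfspaceProj x s b x - q‖ ^ 2 ≤ (1 - σ ^ 2 / G ^ 2) * ‖x - q‖ ^ 2 := by
    have hpyth := norm_halfspaceProj_sub_halfspaceProj_sq_le x s b x q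
    rw [halfspaceProj_eq_self hq, max_eq_right hq] at hpyth
    simp only [sub_self, inner_zero_right, add_zero, sub_zero] at hpyth
    linarith
  calc ‖halfspaceProj x s b x - q‖ ≤ √((1 - σ ^ 2 / G ^ 2) * ‖x - q‖ ^ 2) :=
        Real.le_sqrt_of_sq_le hsq
    _ = polyakRate σ G * ‖x - q‖ := by
      rw [Real.sqrt_mul' _ (sq_nonneg _), Real.sqrt_sq (norm_nonneg _), polyakRate]

end Projections

section Subgradients

variable {E : Type*} [NormedAddCommGroup E] [InnerProductSpace ℝ E]

/-- The vector `s` is a subgradient of `g` at `x`: `IsSubgradAt` in an arbitrary inner product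
space. -/
def IsSubgradient (g : E → ℝ) (x s : E) : Prop := ∀ y, g x + ⟪s, y - x⟫ ≤ g y

theorem IsSubgradient.sub_le_inner {g : E → ℝ} {x s : E} (hs : IsSubgradient g x s) (y : E) :
    g x - g y ≤ ⟪s, x - y⟫ := by
  have := hs y
  rw [← neg_sub x y, inner_neg_right] at this
  linarith

theorem IsSubgradient.sub_le_mul_norm {g : E → ℝ} {x s : E} {G : ℝ} (hs : IsSubgradient g x s)
    (hG : ‖s‖ ≤ G) (y : E) : g x - g y ≤ G * ‖x - y‖ := calc
  g x - g y ≤ ⟪s, x - y⟫ := hs.sub_le_inner y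
  _ ≤ ‖s‖ * ‖x - y‖ := real_inner_le_norm _ _
  _ ≤ G * ‖x - y‖ := by gcongr

theorem isSubgradient_gradient [CompleteSpace E] {f : E → ℝ} {x : E}
    (hf : ConvexOn ℝ Set.univ f) (hdiff : DifferentiableAt ℝ f x) :
    IsSubgradient f x (gradient f x) := by
  intro y
  have hline : ConvexOn ℝ Set.univ (f ∘ AffineMap.lineMap (k := ℝ) x y) :=
    hf.comp_affineMap _
  have hderiv : HasDerivAt (f ∘ AffineMap.lineMap (k := ℝ) x y) ⟪gradient f x, y - x⟫ 0 := by
    have hgrad : HasFDerivAt f (InnerProductSpace.toDual ℝ E (gradient f x))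
        (AffineMap.lineMap x y (0 : ℝ)) := by
      simpa using hdiff.hasGradientAt.hasFDerivAt
    simpa using hgrad.comp_hasDerivAt (0 : ℝ) AffineMap.hasDerivAt_lineMap
  have hslope := hline.le_slope_of_hasDerivAt (Set.mem_univ 0) (Set.mem_univ 1) one_pos hderiv
  simp only [slope_def_field, Function.comp_apply, AffineMap.lineMap_apply_one,
    AffineMap.lineMap_apply_zero, sub_zero, div_one] at hslope
  linarith

end Subgradients

section ErrorBound

theorem mul_add_neg_mul_nonneg_of_nonneg_on_ker {V : Type*} [AddCommGroup V] [Module ℝ V]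
    {h : V → ℝ} {ℓ : V →ₗ[ℝ] ℝ} (hh : ConvexOn ℝ Set.univ h) (hker : ∀ z, ℓ z = 0 → 0 ≤ h z)
    {z w : V} (hz : ℓ z < 0) (hw : 0 < ℓ w) : 0 ≤ ℓ w * h z + -ℓ z * h w := by
  have hd : 0 < ℓ w - ℓ z := by linarith
  set a := ℓ w / (ℓ w - ℓ z) with ha
  set b := -ℓ z / (ℓ w - ℓ z) with hb
  have hconv : h (a • z + b • w) ≤ a * h z + b * h w :=
    hh.2 (Set.mem_univ z) (Set.mem_univ w) (by positivity) (div_nonneg (by linarith) hd.le)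
      (by rw [ha, hb]; field_simp; ring)
  have hzero : ℓ (a • z + b • w) = 0 := by
    simp only [map_add, map_smul, smul_eq_mul, ha, hb]
    ring
  calc 0 ≤ (ℓ w - ℓ z) * (a * h z + b * h w) := mul_nonneg hd.le ((hker _ hzero).trans hconv)
    _ = ℓ w * h z + -ℓ z * h w := by rw [ha, hb]; field_simp

theorem exists_forall_mul_le_of_nonneg_on_ker {V : Type*} [AddCommGroup V] [Module ℝ V]
    {h : V → ℝ} {ℓ : V →ₗ[ℝ] ℝ} (hh : ConvexOn ℝ Set.univ h) (hker : ∀ z, ℓ z = 0 → 0 ≤ h z) :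
    ∃ c : ℝ, ∀ z, c * ℓ z ≤ h z := by
  by_cases hℓ : ∃ e, 0 < ℓ e
  swap
  · push Not at hℓ
    have hzero : ∀ z, ℓ z = 0 := fun z => le_antisymm (hℓ z) (by simpa using hℓ (-z))
    exact ⟨0, fun z => by simpa using hker z (hzero z)⟩
  obtain ⟨e, he⟩ := hℓ
  obtain ⟨c, hc_lower, hc_upper⟩ :
      (upperBounds ((fun z => h z / ℓ z) '' {z | ℓ z < 0}) ∩
        lowerBounds ((fun z => h z / ℓ z) '' {z | 0 < ℓ z})).Nonempty := by
    refine exists_between_of_forall_le ⟨_, -e, by simpa using he, rfl⟩ ⟨_, e, he, rfl⟩ ?_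
    rintro _ ⟨z, hz : ℓ z < 0, rfl⟩ _ ⟨w, hw : 0 < ℓ w, rfl⟩
    have := mul_add_neg_mul_nonneg_of_nonneg_on_ker hh hker hz hw
    beta_reduce
    rw [← neg_div_neg_eq, div_le_div_iff₀ (neg_pos.2 hz) hw]
    linarith
  refine ⟨c, fun z => ?_⟩
  rcases lt_trichotomy (ℓ z) 0 with hz | hz | hz
  · exact (div_le_iff_of_neg hz).1 (hc_lower ⟨z, hz, rfl⟩)
  · simpa [hz] using hker z hz
  · exact (le_div_iff₀ hz).1 (hc_upper ⟨z, hz, rfl⟩)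

variable {E : Type*} [NormedAddCommGroup E] [InnerProductSpace ℝ E] {g : E → ℝ}

theorem le_of_inner_nonneg_of_normal {a : ℝ} {p u : E} (hg : Continuous g) (hu : u ≠ 0)
    (hnormal : ∀ z, g z ≤ a → ⟪u, z - p⟫ ≤ 0) {z : E} (hz : 0 ≤ ⟪u, z - p⟫) : a ≤ g z := by
  have hray : Filter.Tendsto (fun t : ℝ => g (z + t • u)) (nhdsWithin 0 (Set.Ioi 0))
      (nhds (g z)) := by
    have hcont : Continuous fun t : ℝ => g (z + t • u) := by fun_prop
    simpa using (hcont.tendsto 0).mono_left nhdsWithin_le_nhds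
  refine ge_of_tendsto hray (eventually_mem_nhdsWithin.mono fun t (ht : 0 < t) => ?_)
  have hpos : 0 < ⟪u, z + t • u - p⟫ := by
    rw [add_sub_right_comm, inner_add_right, real_inner_smul_right]
    have := real_inner_self_pos.2 hu
    positivity
  by_contra! hlt
  exact hpos.not_ge (hnormal _ hlt.le)

theorem exists_nonneg_smul_isSubgradient_of_normal {p u : E} (hconv : ConvexOn ℝ Set.univ g)
    (hg : Continuous g) (hu : u ≠ 0) (hnormal : ∀ z, g z ≤ g p → ⟪u, z - p⟫ ≤ 0) :
    ∃ c : ℝ, 0 ≤ c ∧ IsSubgradient g p (c • u) := by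
  have hhalf : ∀ z, 0 ≤ ⟪u, z - p⟫ → g p ≤ g z :=
    fun z => le_of_inner_nonneg_of_normal hg hu hnormal
  have hshift : ConvexOn ℝ Set.univ fun z => g (p + z) - g p :=
    (hconv.translate_right p).sub (concaveOn_const (g p) convex_univ)
  obtain ⟨c, hc⟩ := exists_forall_mul_le_of_nonneg_on_ker (ℓ := (innerₗ E) u) hshift
    fun z hz => sub_nonneg.2 (hhalf _ (by simpa using hz.ge))
  have hcut : ∀ z, g p + c * ⟪u, z - p⟫ ≤ g z := fun z => by
    have := hc (z - p)
    simp only [add_sub_cancel, innerₗ_apply_apply] at this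
    linarith
  -- The slope may come out negative only if `p` minimizes `g`; then `0` works instead.
  refine ⟨max c 0, le_max_right _ _, fun z => ?_⟩
  rw [real_inner_smul_left]
  rcases le_total c 0 with hc_sign | hc_sign
  · rw [max_eq_right hc_sign, zero_mul, add_zero]
    rcases le_total 0 ⟪u, z - p⟫ with hz | hz
    · exact hhalf z hz
    · linarith [hcut z, mul_nonneg_of_nonpos_of_nonpos hc_sign hz]
  · rw [max_eq_left hc_sign]
    exact hcut z

theorem exists_eq_and_mul_norm_sub_le [CompleteSpace E] {a σ : ℝ}
    (hconv : ConvexOn ℝ Set.univ g) (hg : Continuous g) (hne : ∃ z, g z ≤ a)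
    (hσ : ∀ z, g z = a → ∀ s, IsSubgradient g z s → σ ≤ ‖s‖) {x : E} (hx : a < g x) :
    ∃ p, g p = a ∧ σ * ‖x - p‖ ≤ g x - a := by
  have hK : Convex ℝ {z | g z ≤ a} := by simpa using hconv.convex_le a
  obtain ⟨p, hp : g p ≤ a, hmin⟩ := exists_norm_eq_iInf_of_complete_convex hne
    (isClosed_le hg continuous_const).isComplete hK x
  have hnormal : ∀ z, g z ≤ a → ⟪x - p, z - p⟫ ≤ 0 :=
    (norm_eq_iInf_iff_real_inner_le_zero hK hp).1 hmin
  have hu : x - p ≠ 0 := sub_ne_zero.2 fun h => hx.not_ge (h ▸ hp)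
  obtain rfl : g p = a := hp.antisymm (le_of_inner_nonneg_of_normal hg hu hnormal (by simp))
  obtain ⟨c, hc, hsub⟩ := exists_nonneg_smul_isSubgradient_of_normal hconv hg hu hnormal
  have hσc : σ ≤ c * ‖x - p‖ := by
    simpa [norm_smul, abs_of_nonneg hc] using hσ p rfl _ hsub
  have hgrowth : g p + c * ‖x - p‖ ^ 2 ≤ g x := by
    simpa only [real_inner_smul_left, real_inner_self_eq_norm_sq] using hsub x
  refine ⟨p, rfl, ?_⟩
  calc σ * ‖x - p‖ ≤ c * ‖x - p‖ * ‖x - p‖ := by gcongr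
    _ ≤ g x - g p := by linarith

/-- The error bound with modulus `σ`: every `x` is within `(g x + ρ)₊ / σ` of a point of the
tightened set `{z | g z ≤ -ρ}`. -/
def HasErrorBound (g : E → ℝ) (ρ σ : ℝ) : Prop :=
  ∀ x, ∃ q, g q ≤ -ρ ∧ σ * ‖x - q‖ ≤ max (g x + ρ) 0

theorem hasErrorBound_of_le_norm_subgradient [CompleteSpace E] {ε ρ σ : ℝ}
    (hconv : ConvexOn ℝ Set.univ g) (hg : Continuous g) (hne : ∃ z, g z ≤ -ε)
    (hσ : ∀ z, g z = -ε → ∀ s, IsSubgradient g z s → σ ≤ ‖s‖) (hρ : ρ ≤ ε) :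
    HasErrorBound g ρ σ := by
  intro x
  rcases le_or_gt (g x) (-ρ) with hx | hx
  · exact ⟨x, hx, by simp⟩
  obtain ⟨p, hp, hpx⟩ := exists_eq_and_mul_norm_sub_le hconv hg hne hσ (x := x) (by linarith)
  have hd : 0 < g x + ε := by linarith
  have hxρ : 0 < g x + ρ := by linarith
  -- The point of the segment from `x` to `p` at which the chord of `g` takes the value `-ρ`.
  set a := (g x + ρ) / (g x + ε)
  have ha_nonneg : 0 ≤ a := by positivity
  have ha_le : a ≤ 1 := (div_le_one hd).2 (by linarith)
  have had : a * (g x + ε) = g x + ρ := div_mul_cancel₀ _ hd.ne'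
  refine ⟨a • p + (1 - a) • x, ?_, ?_⟩
  · calc g (a • p + (1 - a) • x) ≤ a * g p + (1 - a) * g x :=
        hconv.2 (Set.mem_univ p) (Set.mem_univ x) ha_nonneg (sub_nonneg.2 ha_le)
          (add_sub_cancel a 1)
      _ = -ρ := by rw [hp]; linarith
  · have hdist : x - (a • p + (1 - a) • x) = a • (x - p) := by module
    calc σ * ‖x - (a • p + (1 - a) • x)‖ = a * (σ * ‖x - p‖) := by
          rw [hdist, norm_smul, Real.norm_of_nonneg ha_nonneg]
          ring
      _ ≤ a * (g x + ε) := by gcongr; linarith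
      _ = max (g x + ρ) 0 := by rw [had, max_eq_left hxρ.le]

end ErrorBound

section PolyakStep

variable {E : Type*} [NormedAddCommGroup E] [InnerProductSpace ℝ E]

/-- The Polyak feasibility step: `y` is projected onto the cut `{v | g x + ⟪s, v - x⟫ + ρ ≤ 0}` made
at `x` by the subgradient `s`, and then onto the closed ball of radius `R`. -/
noncomputable def polyakStep (g : E → ℝ) (R ρ : ℝ) (s x y : E) : E :=
  closedBallProj R (halfspaceProj x s (g x + ρ) y)

variable {g : E → ℝ} {R ρ : ℝ} {s x q : E}

theorem IsSubgradient.add_inner_nonpos (hs : IsSubgradient g x s) (hq : g q ≤ -ρ) :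
    g x + ρ + ⟪s, q - x⟫ ≤ 0 := by
  linarith [hs q]

theorem nonpos_of_norm_sub_le_div {G : ℝ} (hG : 0 < G) (hs : IsSubgradient g x s)
    (hsG : ‖s‖ ≤ G) (hq : g q ≤ -ρ) (hxq : ‖x - q‖ ≤ ρ / G) : g x ≤ 0 := by
  have hlip := hs.sub_le_mul_norm hsG q
  have hGρ := (le_div_iff₀' hG).1 hxq
  linarith

theorem norm_polyakStep_sub_le (hR : 0 < R) (hs : IsSubgradient g x s) (hq : g q ≤ -ρ)
    (hqR : ‖q‖ ≤ R) (y : E) : ‖polyakStep g R ρ s x y - q‖ ≤ ‖y - q‖ := calc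
  ‖polyakStep g R ρ s x y - q‖ ≤ ‖halfspaceProj x s (g x + ρ) y - q‖ :=
    norm_closedBallProj_sub_le hR _ hqR
  _ = ‖halfspaceProj x s (g x + ρ) y - halfspaceProj x s (g x + ρ) q‖ := by
    rw [halfspaceProj_eq_self (hs.add_inner_nonpos hq)]
  _ ≤ ‖y - q‖ := norm_halfspaceProj_sub_halfspaceProj_le ..

theorem norm_polyakStep_sub_le_add {σ G : ℝ} (hR : 0 < R) (hσ : 0 < σ)
    (hs : IsSubgradient g x s) (hsG : ‖s‖ ≤ G) (hq : g q ≤ -ρ) (hqR : ‖q‖ ≤ R)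
    (hxq : σ * ‖x - q‖ ≤ max (g x + ρ) 0) (y : E) :
    ‖polyakStep g R ρ s x y - q‖ ≤ ‖y - x‖ + polyakRate σ G * ‖x - q‖ := by
  let P := halfspaceProj x s (g x + ρ)
  calc ‖polyakStep g R ρ s x y - q‖ ≤ ‖P y - q‖ := norm_closedBallProj_sub_le hR _ hqR
    _ ≤ ‖P y - P x‖ + ‖P x - q‖ := norm_sub_le_norm_sub_add_norm_sub ..
    _ ≤ ‖y - x‖ + polyakRate σ G * ‖x - q‖ := by
      gcongr
      · exact norm_halfspaceProj_sub_halfspaceProj_le ..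
      · exact norm_halfspaceProj_self_sub_le hσ hsG (hs.add_inner_nonpos hq) hxq

theorem exists_norm_polyakStep_sub_le {σ G r : ℝ} {p y : E} (hR : 0 < R) (hσ : 0 < σ)
    (hs : IsSubgradient g x s) (hsG : ‖s‖ ≤ G) (hball : ∀ z, g z ≤ -ρ → ‖z‖ ≤ R)
    (herr : HasErrorBound g ρ σ) (hp : g p ≤ -ρ) (hxp : ‖x - p‖ ≤ r)
    (hy : ‖y - x‖ ≤ (1 - polyakRate σ G) * r) :
    ∃ q, g q ≤ -ρ ∧ ‖polyakStep g R ρ s x y - q‖ ≤ r := by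
  obtain ⟨q, hq, hxq, hxq_err⟩ :
      ∃ q, g q ≤ -ρ ∧ ‖x - q‖ ≤ r ∧ σ * ‖x - q‖ ≤ max (g x + ρ) 0 := by
    obtain ⟨q, hq, hxq⟩ := herr x
    rcases le_total ‖x - p‖ ‖x - q‖ with hle | hle
    · exact ⟨p, hp, hxp, (mul_le_mul_of_nonneg_left hle hσ.le).trans hxq⟩
    · exact ⟨q, hq, hle.trans hxp, hxq⟩
  have hrate : 0 ≤ polyakRate σ G := Real.sqrt_nonneg _
  refine ⟨q, hq, ?_⟩
  calc ‖polyakStep g R ρ s x y - q‖ ≤ ‖y - x‖ + polyakRate σ G * ‖x - q‖ :=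
        norm_polyakStep_sub_le_add hR hσ hs hsG hq (hball q hq) hxq_err y
    _ ≤ (1 - polyakRate σ G) * r + polyakRate σ G * r := by gcongr
    _ = r := by ring

end PolyakStep

section GradientDescent

variable {E : Type*} [NormedAddCommGroup E] [InnerProductSpace ℝ E]

theorem inner_le_of_norm_sub_le_norm_descent {η : ℝ} (hη : 0 < η) {x x' v q : E}
    (hx' : ‖x' - q‖ ≤ ‖x - η • v - q‖) :
    ⟪v, x - q⟫ ≤ (‖x - q‖ ^ 2 - ‖x' - q‖ ^ 2) / (2 * η) + η * ‖v‖ ^ 2 / 2 := by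
  have hexpand : ‖x - η • v - q‖ ^ 2 = ‖x - q‖ ^ 2 - 2 * η * ⟪v, x - q⟫ + η ^ 2 * ‖v‖ ^ 2 := by
    rw [sub_right_comm, norm_sub_sq_real, real_inner_smul_right, norm_smul, mul_pow,
      Real.norm_eq_abs, sq_abs, real_inner_comm]
    ring
  have hsq : ‖x' - q‖ ^ 2 ≤ ‖x - η • v - q‖ ^ 2 := by gcongr
  have hscaled : ⟪v, x - q⟫ * (2 * η) ≤ ‖x - q‖ ^ 2 - ‖x' - q‖ ^ 2 + η ^ 2 * ‖v‖ ^ 2 := by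
    linarith
  calc ⟪v, x - q⟫ ≤ (‖x - q‖ ^ 2 - ‖x' - q‖ ^ 2 + η ^ 2 * ‖v‖ ^ 2) / (2 * η) :=
        (le_div_iff₀ (by positivity)).2 hscaled
    _ = (‖x - q‖ ^ 2 - ‖x' - q‖ ^ 2) / (2 * η) + η * ‖v‖ ^ 2 / 2 := by field_simp

theorem sum_inner_le_of_norm_sub_le_norm_descent {T : ℕ} {η G : ℝ} (hη : 0 < η)
    {x v : ℕ → E} {q : E} (hv : ∀ t ∈ Finset.Icc 1 T, ‖v t‖ ≤ G)
    (hx : ∀ t ∈ Finset.Icc 1 T, ‖x (t + 1) - q‖ ≤ ‖x t - η • v t - q‖) :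
    ∑ t ∈ Finset.Icc 1 T, ⟪v t, x t - q⟫ ≤ ‖x 1 - q‖ ^ 2 / (2 * η) + T * (η * G ^ 2 / 2) := by
  have htelescope : ∑ t ∈ Finset.Icc 1 T, (‖x t - q‖ ^ 2 - ‖x (t + 1) - q‖ ^ 2) ≤
      ‖x 1 - q‖ ^ 2 := by
    have hsum := Finset.sum_Ico_sub (fun t => -‖x t - q‖ ^ 2) (Nat.le_add_left 1 T)
    simp only [neg_sub_neg, Finset.Ico_add_one_right_eq_Icc] at hsum
    exact hsum.trans_le (sub_le_self _ (sq_nonneg _))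
  calc ∑ t ∈ Finset.Icc 1 T, ⟪v t, x t - q⟫
      ≤ ∑ t ∈ Finset.Icc 1 T,
          ((‖x t - q‖ ^ 2 - ‖x (t + 1) - q‖ ^ 2) / (2 * η) + η * G ^ 2 / 2) := by
        refine Finset.sum_le_sum fun t ht =>
          (inner_le_of_norm_sub_le_norm_descent hη (hx t ht)).trans ?_
        gcongr
        exact hv t ht
    _ = (∑ t ∈ Finset.Icc 1 T, (‖x t - q‖ ^ 2 - ‖x (t + 1) - q‖ ^ 2)) / (2 * η) +
          T * (η * G ^ 2 / 2) := by
        rw [Finset.sum_add_distrib, ← Finset.sum_div, Finset.sum_const, Nat.card_Icc,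
          add_tsub_cancel_right, nsmul_eq_mul]
    _ ≤ ‖x 1 - q‖ ^ 2 / (2 * η) + T * (η * G ^ 2 / 2) := by gcongr

end GradientDescent

section PolyakRun

variable {E : Type*} [NormedAddCommGroup E] [InnerProductSpace ℝ E]

/-- A run over rounds `1, …, T` of online gradient descent with Polyak feasibility steps: `v t` is
the cost (sub)gradient used in round `t`, and `s t` the subgradient of the constraint `g`. -/
structure IsPolyakRun (g : E → ℝ) (R ρ η : ℝ) (T : ℕ) (v s x : ℕ → E) : Prop where
  isSubgradient : ∀ t ∈ Finset.Icc 1 T, IsSubgradient g (x t) (s t)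
  update : ∀ t ∈ Finset.Icc 1 T, x (t + 1) = polyakStep g R ρ (s t) (x t) (x t - η • v t)

theorem isPolyakRun_of_projBall {d T : ℕ} {R ρ η : ℝ} {g : EuclideanSpace ℝ (Fin d) → ℝ}
    {v s x y : ℕ → EuclideanSpace ℝ (Fin d)}
    (hs : ∀ t ∈ Finset.Icc 1 T, IsSubgradAt g (x t) (s t))
    (hy : ∀ t ∈ Finset.Icc 1 T, y t = x t - η • v t)
    (hupd : ∀ t ∈ Finset.Icc 1 T,
      x (t + 1) = if s t ≠ 0 then
          projBall R (y t - ((max (g (x t) + ⟪s t, y t - x t⟫ + ρ) 0) / ‖s t‖ ^ 2) • s t)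
        else projBall R (y t)) :
    IsPolyakRun g R ρ η T v s x where
  isSubgradient := hs
  update t ht := by
    rw [hupd t ht, ← hy t ht, polyakStep, halfspaceProj, add_right_comm]
    split_ifs with hst
    · rfl
    · simp [not_not.1 hst, projBall, closedBallProj]

namespace IsPolyakRun

variable {g : E → ℝ} {R ρ η σ Gg : ℝ} {T : ℕ} {v s x : ℕ → E}

theorem norm_le_and_exists_norm_sub_le (hrun : IsPolyakRun g R ρ η T v s x) (hR : 0 < R)
    (hGg : 0 < Gg) (hσ : 0 < σ) (hρ : 0 ≤ ρ) (hball : ∀ z, g z ≤ 0 → ‖z‖ ≤ R)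
    (hsub : ∀ z, ‖z‖ ≤ R → ∀ sz, IsSubgradient g z sz → ‖sz‖ ≤ Gg) (herr : HasErrorBound g ρ σ)
    (hv : ∀ t ∈ Finset.Icc 1 T, g (x t) ≤ 0 → ‖η • v t‖ ≤ (1 - polyakRate σ Gg) * (ρ / Gg))
    (hx1 : g (x 1) ≤ -ρ) {t : ℕ} (ht : 1 ≤ t) (htT : t ≤ T) :
    ‖x t‖ ≤ R ∧ ∃ p, g p ≤ -ρ ∧ ‖x t - p‖ ≤ ρ / Gg := by
  induction t, ht using Nat.le_induction with
  | base => exact ⟨hball _ (by linarith), x 1, hx1, by simpa using by positivity⟩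
  | succ t ht ih =>
    obtain ⟨hxR, p, hp, hxp⟩ := ih (by lia)
    have htI : t ∈ Finset.Icc 1 T := Finset.mem_Icc.2 ⟨ht, by lia⟩
    have hst := hrun.isSubgradient t htI
    have hstG : ‖s t‖ ≤ Gg := hsub _ hxR _ hst
    have hfeas : g (x t) ≤ 0 := nonpos_of_norm_sub_le_div hGg hst hstG hp hxp
    rw [hrun.update t htI]
    refine ⟨norm_closedBallProj_le hR.le _, exists_norm_polyakStep_sub_le hR hσ hst hstG
      (fun z hz => hball z (by linarith)) herr hp hxp ?_⟩
    simpa using hv t htI hfeas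

theorem forall_nonpos (hrun : IsPolyakRun g R ρ η T v s x) (hR : 0 < R)
    (hGg : 0 < Gg) (hσ : 0 < σ) (hρ : 0 ≤ ρ) (hball : ∀ z, g z ≤ 0 → ‖z‖ ≤ R)
    (hsub : ∀ z, ‖z‖ ≤ R → ∀ sz, IsSubgradient g z sz → ‖sz‖ ≤ Gg) (herr : HasErrorBound g ρ σ)
    (hv : ∀ t ∈ Finset.Icc 1 T, g (x t) ≤ 0 → ‖η • v t‖ ≤ (1 - polyakRate σ Gg) * (ρ / Gg))
    (hx1 : g (x 1) ≤ -ρ) : ∀ t ∈ Finset.Icc 1 T, g (x t) ≤ 0 := by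
  intro t ht
  obtain ⟨ht1, htT⟩ := Finset.mem_Icc.1 ht
  obtain ⟨hxR, p, hp, hxp⟩ :=
    hrun.norm_le_and_exists_norm_sub_le hR hGg hσ hρ hball hsub herr hv hx1 ht1 htT
  have hst := hrun.isSubgradient t ht
  exact nonpos_of_norm_sub_le_div hGg hst (hsub _ hxR _ hst) hp hxp

theorem sum_sub_le {Gf : ℝ} {f : ℕ → E → ℝ} {f' : ℕ → E → E}
    (hrun : IsPolyakRun g R ρ η T (fun t => f' t (x t)) s x) (hR : 0 < R) (hη : 0 < η)
    (hGf : 0 ≤ Gf) (hσ : 0 < σ) (hρ : 0 ≤ ρ) (hball : ∀ z, g z ≤ 0 → ‖z‖ ≤ R)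
    (herr : HasErrorBound g ρ σ)
    (hf' : ∀ t ∈ Finset.Icc 1 T, ∀ z, g z ≤ 0 → IsSubgradient (f t) z (f' t z))
    (hf'_norm : ∀ t ∈ Finset.Icc 1 T, ∀ z, g z ≤ 0 → ‖f' t z‖ ≤ Gf)
    (hfeas : ∀ t ∈ Finset.Icc 1 T, g (x t) ≤ 0) (hx1 : ‖x 1‖ ≤ R) {z : E} (hz : g z ≤ 0) :
    ∑ t ∈ Finset.Icc 1 T, (f t (x t) - f t z) ≤
      (2 * R) ^ 2 / (2 * η) + T * (η * Gf ^ 2 / 2) + T * (Gf * (ρ / σ)) := by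
  obtain ⟨q, hq, hzq⟩ := herr z
  have hq_feas : g q ≤ 0 := by linarith
  have hqz : ‖q - z‖ ≤ ρ / σ := by
    rw [le_div_iff₀' hσ, norm_sub_rev]
    exact hzq.trans (max_le (by linarith) hρ)
  have hx1q : ‖x 1 - q‖ ≤ 2 * R := by
    linarith [norm_sub_le (x 1) q, hball q hq_feas]
  have hcost : ∀ t ∈ Finset.Icc 1 T,
      f t (x t) - f t z ≤ ⟪f' t (x t), x t - q⟫ + Gf * (ρ / σ) := fun t ht => by
    have hxq := (hf' t ht _ (hfeas t ht)).sub_le_inner q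
    have hqz' : f t q - f t z ≤ Gf * (ρ / σ) :=
      ((hf' t ht q hq_feas).sub_le_mul_norm (hf'_norm t ht q hq_feas) z).trans (by gcongr)
    linarith
  have hdescent : ∀ t ∈ Finset.Icc 1 T,
      ‖x (t + 1) - q‖ ≤ ‖x t - η • f' t (x t) - q‖ := fun t ht => by
    rw [hrun.update t ht]
    exact norm_polyakStep_sub_le hR (hrun.isSubgradient t ht) hq (hball q hq_feas) _
  calc ∑ t ∈ Finset.Icc 1 T, (f t (x t) - f t z)
      ≤ ∑ t ∈ Finset.Icc 1 T, ⟪f' t (x t), x t - q⟫ + T * (Gf * (ρ / σ)) := by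
        simpa [Finset.sum_add_distrib] using Finset.sum_le_sum hcost
    _ ≤ ‖x 1 - q‖ ^ 2 / (2 * η) + T * (η * Gf ^ 2 / 2) + T * (Gf * (ρ / σ)) := by
        gcongr
        exact sum_inner_le_of_norm_sub_le_norm_descent hη
          (fun t ht => hf'_norm t ht _ (hfeas t ht)) hdescent
    _ ≤ (2 * R) ^ 2 / (2 * η) + T * (η * Gf ^ 2 / 2) + T * (Gf * (ρ / σ)) := by gcongr

end IsPolyakRun

end PolyakRun

theorem stmt17_general {E : Type*} [NormedAddCommGroup E] [InnerProductSpace ℝ E]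
    [CompleteSpace E] {T : ℕ} (hT : 1 ≤ T) {R Gf Gg ε σ η ρ α : ℝ} {g : E → ℝ}
    {f : ℕ → E → ℝ} {f' : ℕ → E → E} {x s : ℕ → E}
    (hR : 0 < R) (hGf : 0 < Gf) (hGg : 0 < Gg)
    (hgconv : ConvexOn ℝ Set.univ g) (hgcont : Continuous g)
    (hball : {z | g z ≤ 0} ⊆ Metric.closedBall 0 R)
    (hf' : ∀ t ∈ Finset.Icc 1 T, ∀ z, g z ≤ 0 → IsSubgradient (f t) z (f' t z))
    (hf'_norm : ∀ t ∈ Finset.Icc 1 T, ∀ z, g z ≤ 0 → ‖f' t z‖ ≤ Gf)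
    (hsub : ∀ z ∈ Metric.closedBall (0 : E) R, ∀ sz, IsSubgradient g z sz → ‖sz‖ ≤ Gg)
    (hσ : 0 < σ) (hne : ∃ z, g z = -ε)
    (hlevel : ∀ z, g z = -ε → ∀ sz, IsSubgradient g z sz → σ ≤ ‖sz‖)
    (hα : 0 < α) (hαε : α ≤ ε) (hx1 : g (x 1) ≤ -α)
    (hρ : ρ = α / √T) (hη : η = (1 - polyakRate σ Gg) * ρ / (Gf * Gg))
    (hrun : IsPolyakRun g R ρ η T (fun t => f' t (x t)) s x) :
    (∀ t ∈ Finset.Icc 1 T, g (x t) ≤ 0) ∧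
    ∀ z, g z ≤ 0 → ∑ t ∈ Finset.Icc 1 T, (f t (x t) - f t z) ≤
      (2 * Gf * Gg * R ^ 2 / ((1 - polyakRate σ Gg) * α) +
        Gf * (1 - polyakRate σ Gg) * α / (2 * Gg) + Gf * α / σ) * √T := by
  have hsqrtT : 1 ≤ √(T : ℝ) := Real.one_le_sqrt.2 (by exact_mod_cast hT)
  have hρ_pos : 0 < ρ := by rw [hρ]; positivity
  have hρα : ρ ≤ α := hρ ▸ div_le_self hα.le hsqrtT
  have hξ : 0 < 1 - polyakRate σ Gg := sub_pos.2 (polyakRate_lt_one hσ hGg)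
  have hη_pos : 0 < η := by rw [hη]; positivity
  have herr : HasErrorBound g ρ σ := hasErrorBound_of_le_norm_subgradient hgconv hgcont
    (hne.imp fun _ => le_of_eq) hlevel (hρα.trans hαε)
  simp only [Set.subset_def, Set.mem_ofPred_eq, mem_closedBall_zero_iff] at hball hsub
  have hstep : ∀ t ∈ Finset.Icc 1 T, g (x t) ≤ 0 →
      ‖η • f' t (x t)‖ ≤ (1 - polyakRate σ Gg) * (ρ / Gg) := fun t ht hxt => calc
    ‖η • f' t (x t)‖ = η * ‖f' t (x t)‖ := by rw [norm_smul, Real.norm_of_nonneg hη_pos.le]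
    _ ≤ η * Gf := by gcongr; exact hf'_norm t ht _ hxt
    _ = (1 - polyakRate σ Gg) * (ρ / Gg) := by rw [hη]; field_simp
  have hfeas := hrun.forall_nonpos hR hGg hσ hρ_pos.le hball hsub herr hstep (by linarith)
  refine ⟨hfeas, fun z hz => ?_⟩
  refine (hrun.sum_sub_le hR hη_pos hGf.le hσ hρ_pos.le hball herr hf' hf'_norm hfeas
    (hball _ (by linarith)) hz).trans_eq ?_
  have hT_sq : (T : ℝ) = √(T : ℝ) ^ 2 := (Real.sq_sqrt (Nat.cast_nonneg T)).symm
  rw [hη, hρ]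
  generalize √(T : ℝ) = r at *
  rw [hT_sq]
  field_simp

theorem stmt17 {d T : ℕ} (hT : 1 ≤ T)
    {R Gf Gg ε σ η ρ α : ℝ}
    (g : EuclideanSpace ℝ (Fin d) → ℝ)
    (f : ℕ → EuclideanSpace ℝ (Fin d) → ℝ)
    (x y s : ℕ → EuclideanSpace ℝ (Fin d))
    (hR : 0 < R) (hGf : 0 < Gf) (hGg : 0 < Gg)
    (hgconv : ConvexOn ℝ Set.univ g)
    (hA1 : {z : EuclideanSpace ℝ (Fin d) | g z ≤ 0} ⊆ Metric.closedBall 0 R)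
    (hfconv : ∀ t ∈ Finset.Icc 1 T, ConvexOn ℝ Set.univ (f t))
    (hfdiff : ∀ t ∈ Finset.Icc 1 T, Differentiable ℝ (f t))
    (hA2' : ∀ t ∈ Finset.Icc 1 T, ∀ z : EuclideanSpace ℝ (Fin d), g z ≤ 0 →
      ‖gradient (f t) z‖ ≤ Gf)
    (hA3 : ∀ z ∈ Metric.closedBall (0 : EuclideanSpace ℝ (Fin d)) R,
      ∀ sz, IsSubgradAt g z sz → ‖sz‖ ≤ Gg)
    (hσ : 0 < σ) (hε : 0 < ε) (hσGg : σ ≤ Gg)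
    (hA4ne : ∃ z, g z = -ε)
    (hA4 : ∀ z : EuclideanSpace ℝ (Fin d), g z = -ε → ∀ sz, IsSubgradAt g z sz → σ ≤ ‖sz‖)
    (hα : 0 < α) (hαε : α ≤ ε)
    (hx1g : g (x 1) ≤ -α)
    (hρdef : ρ = α / Real.sqrt T)
    (hηdef : η = (1 - Real.sqrt (1 - σ ^ 2 / Gg ^ 2)) * ρ / (Gf * Gg))
    (hs : ∀ t ∈ Finset.Icc 1 T, IsSubgradAt g (x t) (s t))
    (hy : ∀ t ∈ Finset.Icc 1 T, y t = x t - η • gradient (f t) (x t))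
    (hupd : ∀ t ∈ Finset.Icc 1 T,
      x (t + 1) = if s t ≠ 0 then
          projBall R (y t - ((max (g (x t) + ⟪s t, y t - x t⟫ + ρ) 0) / ‖s t‖ ^ 2) • s t)
        else projBall R (y t))
    :
    (∀ t ∈ Finset.Icc 1 T, g (x t) ≤ 0) ∧
    (∀ xstar : EuclideanSpace ℝ (Fin d), g xstar ≤ 0 →
      ∑ t ∈ Finset.Icc 1 T, (f t (x t) - f t xstar) ≤
        (2 * Gf * Gg * R ^ 2 / ((1 - Real.sqrt (1 - σ ^ 2 / Gg ^ 2)) * α) +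
          Gf * (1 - Real.sqrt (1 - σ ^ 2 / Gg ^ 2)) * α / (2 * Gg) +
          Gf * α / σ) * Real.sqrt T) := by
  exact stmt17_general hT hR hGf hGg hgconv
    (continuousOn_univ.1 (hgconv.continuousOn isOpen_univ)) hA1
    (fun t ht z _ => isSubgradient_gradient (hfconv t ht) (hfdiff t ht z)) hA2' hA3 hσ hA4ne hA4
    hα hαε hx1g hρdef hηdef (isPolyakRun_of_projBall hs hy hupd)
end
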